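/- Let S = s₁s₂… be an infinite 0-1 sequence such that the set {i : s_i = 1} has lower natural density α > 0. Define E_S = {x ∈ [0,1) : x = Σ x_i 2^{-i}, x_i ∈ {0,1}, x_i = 0 whenever s_i = 0}. Then the Hausdorff dimension of E_S equals α. -/

import Mathlib

open Filter MeasureTheory Set

/-- The `n`-th binary digit of `x ∈ [0,1)` (dyadic rationals get the
terminating expansion, i.e. the one with finitely many `1`'s). -/
noncomputable def digit (x : ℝ) (n : ℕ) : ℕ := (⌊x * 2 ^ n⌋).toNat % 2

/-- Positions of digit `1` in the binary expansion of `x`. -/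
def onesOf (x : ℝ) : Set ℕ := {n : ℕ | digit x n = 1}

/-- `A` contains an `m`-term arithmetic progression. -/
def HasAP (A : Set ℕ) (m : ℕ) : Prop :=
  ∃ a d : ℕ, 1 ≤ d ∧ ∀ t < m, a + t * d ∈ A

/-- `F i`: numbers in `[0,1)` whose binary expansion contains no `i`-term
arithmetic progression of positions of digit `1`. -/
noncomputable def F (i : ℕ) : Set ℝ :=
  {x ∈ Set.Ico (0 : ℝ) 1 | ¬ HasAP (onesOf x) i}

/-- The Erdős set. -/
noncomputable def E : Set ℝ := ⋃ i, ⋃ (_ : 3 ≤ i), F i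

/-- The set of reals in `[0,1)` whose binary digits are supported on the
positions where `S` is `true`. -/
noncomputable def ES (S : ℕ → Bool) : Set ℝ :=
  {x ∈ Set.Ico (0 : ℝ) 1 | ∀ i : ℕ, S i = false → digit x i = 0}

open scoped ENNReal NNReal

/-- Number of free positions in `[1,n]`. -/
def cnt (S : ℕ → Bool) : ℕ → ℕ
  | 0 => 0
  | n + 1 => cnt S n + if S (n + 1) then 1 else 0

/-- Compressed prefix: the digits of `x` at free positions in `[1,n]`, read as an integer. -/
noncomputable def cprs (S : ℕ → Bool) (x : ℝ) : ℕ → ℕ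
  | 0 => 0
  | n + 1 => if S (n + 1) then 2 * cprs S x n + digit x (n + 1) else cprs S x n

theorem cnt_eq (S : ℕ → Bool) (n : ℕ) :
    ({i : ℕ | S i = true} ∩ Set.Icc 1 n).ncard = cnt S n := by
  induction n with
  | zero => simp [cnt]
  | succ n ih =>
    have hfin : ({i : ℕ | S i = true} ∩ Set.Icc 1 n).Finite := (Set.finite_Icc 1 n).inter_of_right _
    by_cases h : S (n + 1) = true
    · have : ({i : ℕ | S i = true} ∩ Set.Icc 1 (n+1)) =
          insert (n+1) ({i : ℕ | S i = true} ∩ Set.Icc 1 n) := by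
        ext i
        simp only [mem_inter_iff, mem_ofPred_eq, mem_Icc, mem_insert_iff]
        constructor
        · rintro ⟨h1, h2, h3⟩
          by_cases hi : i = n + 1
          · exact Or.inl hi
          · exact Or.inr ⟨h1, h2, by omega⟩
        · rintro (rfl | ⟨h1, h2, h3⟩)
          · exact ⟨h, by omega, le_refl _⟩
          · exact ⟨h1, h2, by omega⟩
      rw [this, Set.ncard_insert_of_notMem _ hfin, ih]
      · simp [cnt, h]
      · simp
    · have : ({i : ℕ | S i = true} ∩ Set.Icc 1 (n+1)) =
          ({i : ℕ | S i = true} ∩ Set.Icc 1 n) := by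
        ext i
        simp only [mem_inter_iff, mem_ofPred_eq, mem_Icc]
        constructor
        · rintro ⟨h1, h2, h3⟩
          have : i ≠ n + 1 := by rintro rfl; exact h h1
          exact ⟨h1, h2, by omega⟩
        · rintro ⟨h1, h2, h3⟩
          exact ⟨h1, h2, by omega⟩
      rw [this, ih]; simp [cnt, h]

theorem cnt_le (S : ℕ → Bool) (n : ℕ) : cnt S n ≤ n := by
  induction n with
  | zero => simp [cnt]
  | succ n ih => simp only [cnt]; split_ifs <;> omega

/-- Prefix as a natural number. -/
noncomputable def pre2 (x : ℝ) (n : ℕ) : ℕ := ⌊x * 2 ^ n⌋₊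

theorem digit_eq (x : ℝ) (n : ℕ) : digit x n = pre2 x n % 2 := by
  rw [digit, pre2, Int.floor_toNat]

theorem pre2_succ {x : ℝ} (n : ℕ) :
    pre2 x (n + 1) = 2 * pre2 x n + digit x (n + 1) := by
  have h : pre2 x n = pre2 x (n + 1) / 2 := by
    unfold pre2
    rw [← Nat.floor_div_natCast]
    congr 1
    push_cast
    rw [pow_succ]; ring
  rw [digit_eq]; omega

theorem digit_lt (x : ℝ) (n : ℕ) : digit x n < 2 := Nat.mod_lt _ (by norm_num)

theorem pre2_zero {x : ℝ} (hx : x ∈ Ico (0:ℝ) 1) : pre2 x 0 = 0 := by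
  simp [pre2, Nat.floor_eq_zero, hx.2]

theorem pre2_le {x : ℝ} (hx : 0 ≤ x) (n : ℕ) : (pre2 x n : ℝ) / 2 ^ n ≤ x := by
  rw [div_le_iff₀ (by positivity)]
  exact Nat.floor_le (by positivity)

theorem lt_pre2 (x : ℝ) (n : ℕ) : x < (pre2 x n + 1 : ℝ) / 2 ^ n := by
  rw [lt_div_iff₀ (by positivity)]
  exact Nat.lt_floor_add_one _

theorem cmp_lt (S : ℕ → Bool) (x : ℝ) (n : ℕ) : cprs S x n < 2 ^ cnt S n := by
  induction n with
  | zero => simp [cprs, cnt]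
  | succ n ih =>
    have := digit_lt x (n+1)
    simp only [cprs, cnt]; split_ifs
    · rw [pow_succ]; omega
    · simpa using ih

theorem key (S : ℕ → Bool) {x y : ℝ} (hx : x ∈ ES S) (hy : y ∈ ES S) (n : ℕ) :
    (pre2 y n = pre2 x n → cprs S y n = cprs S x n) ∧
    (pre2 y n < pre2 x n → cprs S y n < cprs S x n) ∧
    (pre2 x n < pre2 y n → cprs S x n < cprs S y n) ∧
    (pre2 y n ≤ pre2 x n + 1 → cprs S y n ≤ cprs S x n + 1) := by
  induction n with
  | zero => simp [pre2_zero hx.1, pre2_zero hy.1, cprs]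
  | succ n ih =>
    obtain ⟨a, b, b', c⟩ := ih
    rw [pre2_succ, pre2_succ]
    have h1 := digit_lt x (n+1)
    have h2 := digit_lt y (n+1)
    by_cases h : S (n+1) = true
    · simp only [cprs, h, if_true]
      rcases lt_trichotomy (pre2 y n) (pre2 x n) with h' | h' | h'
      · have := b h'; refine ⟨?_, ?_, ?_, ?_⟩ <;> omega
      · have := a h'; refine ⟨?_, ?_, ?_, ?_⟩ <;> omega
      · have := b' h'; refine ⟨?_, ?_, ?_, ?_⟩ <;> omega
    · have h3 := hx.2 (n+1) (by simpa using h)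
      have h4 := hy.2 (n+1) (by simpa using h)
      simp only [cprs, h, h3, h4]
      refine ⟨?_, ?_, ?_, ?_⟩
      · intro hh; simpa using a (by omega)
      · intro hh; simpa using b (by omega)
      · intro hh; simpa using b' (by omega)
      · intro hh
        rcases lt_trichotomy (pre2 y n) (pre2 x n) with h' | h' | h'
        · have := b h'; simp; omega
        · have := a h'; simp; omega
        · omega

theorem close_of_cmp_eq (S : ℕ → Bool) {x y : ℝ} (hx : x ∈ ES S) (hy : y ∈ ES S) (n : ℕ)
    (h : cprs S x n = cprs S y n) : |x - y| ≤ (1/2 : ℝ) ^ n := by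
  obtain ⟨a, b, b', c⟩ := key S hx hy n
  have hp : pre2 x n = pre2 y n := by
    rcases lt_trichotomy (pre2 y n) (pre2 x n) with h' | h' | h'
    · have := b h'; omega
    · exact h'.symm
    · have := b' h'; omega
  have h1 := pre2_le hx.1.1 n
  have h2 := lt_pre2 x n
  have h3 := pre2_le hy.1.1 n
  have h4 := lt_pre2 y n
  rw [add_div] at h2 h4
  rw [hp] at h1 h2
  rw [one_div, inv_pow, ← one_div]
  rw [abs_le]; constructor <;> linarith

theorem upper (S : ℕ → Bool) (s : ℝ) (hs : 0 < s)
    (hf : ∃ᶠ n : ℕ in atTop, (cnt S n : ℝ) ≤ s * n) : dimH (ES S) ≤ ENNReal.ofReal s := by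
  have hm : (Measure.hausdorffMeasure s : Measure ℝ) (ES S) ≤ 1 := by
    let t : (n : ℕ) → Fin (2 ^ cnt S n) → Set ℝ := fun n k => {x ∈ ES S | cprs S x n = k}
    have hd : ∀ n k, Metric.ediam (t n k) ≤ ENNReal.ofReal ((1/2 : ℝ) ^ n) := by
      intro n k
      apply Metric.ediam_le
      intro x hx y hy
      rw [edist_dist, Real.dist_eq]
      exact ENNReal.ofReal_le_ofReal (close_of_cmp_eq S hx.1 hy.1 n (hx.2.trans hy.2.symm))
    have hr : Tendsto (fun n : ℕ => ENNReal.ofReal ((1/2 : ℝ) ^ n)) atTop (nhds 0) := by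
      have := ENNReal.tendsto_ofReal
        (tendsto_pow_atTop_nhds_zero_of_lt_one (r := (1/2:ℝ)) (by norm_num) (by norm_num))
      simpa using this
    refine (Measure.hausdorffMeasure_le_liminf_sum s (ES S) _ hr t
      (Eventually.of_forall hd) (Eventually.of_forall ?_)).trans ?_
    · intro n x hx
      exact mem_iUnion.2 ⟨⟨cprs S x n, cmp_lt S x n⟩, hx, rfl⟩
    · refine liminf_le_of_frequently_le (hf.mono ?_)
      intro n hn
      calc ∑ i, Metric.ediam (t n i) ^ s ≤ ∑ i : Fin (2 ^ cnt S n), ENNReal.ofReal ((1/2 : ℝ) ^ n) ^ s :=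
            Finset.sum_le_sum fun i _ => ENNReal.rpow_le_rpow (hd n i) hs.le
        _ = ENNReal.ofReal (2 ^ (cnt S n : ℝ) * (2:ℝ) ^ (-(s * n))) := by
            rw [Finset.sum_const, Finset.card_univ, Fintype.card_fin, nsmul_eq_mul,
              ENNReal.ofReal_rpow_of_nonneg (by positivity) hs.le,
              ENNReal.ofReal_mul (by positivity)]
            congr 1
            · rw [Real.rpow_natCast]
              simp [ENNReal.ofReal_pow]
            · congr 1
              rw [one_div, inv_pow, ← Real.rpow_natCast, ← Real.rpow_neg (by norm_num),
                ← Real.rpow_mul (by norm_num)]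
              congr 1; ring
        _ ≤ 1 := by
            rw [ENNReal.ofReal_le_one, ← Real.rpow_add (by norm_num)]
            exact Real.rpow_le_one_of_one_le_of_nonpos (by norm_num) (by linarith)
  have := dimH_le_of_hausdorffMeasure_ne_top (s := ES S) (d := s.toNNReal) (by
    rw [Real.coe_toNNReal _ hs.le]; exact ne_top_of_le_ne_top (by simp) hm)
  exact this

/-- A digit sequence that is not eventually `1` comes from a real in `[0,1)`. -/
theorem exists_real (D : ℕ → ℕ) (h0 : D 0 = 0)
    (h1 : ∀ n, D (n+1) = 2 * D n ∨ D (n+1) = 2 * D n + 1)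
    (h2 : ∀ n, ∃ m, n ≤ m ∧ D (m+1) = 2 * D m) :
    ∃ x ∈ Ico (0:ℝ) 1, ∀ n, pre2 x n = D n := by
  have hmono : Monotone (fun n => (D n : ℝ) / 2 ^ n) := by
    refine monotone_nat_of_le_succ fun n => ?_
    rw [div_le_div_iff₀ (by positivity) (by positivity), pow_succ]
    have : (2 * D n : ℝ) ≤ D (n+1) := by
      have := h1 n; exact_mod_cast (by omega : 2 * D n ≤ D (n+1))
    have h3 : (0:ℝ) < 2 ^ n := by positivity
    nlinarith
  have hanti : Antitone (fun n => ((D n : ℝ) + 1) / 2 ^ n) := by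
    refine antitone_nat_of_succ_le fun n => ?_
    rw [div_le_div_iff₀ (by positivity) (by positivity), pow_succ]
    have : (D (n+1) : ℝ) ≤ 2 * D n + 1 := by
      have := h1 n; exact_mod_cast (by omega : D (n+1) ≤ 2 * D n + 1)
    have h3 : (0:ℝ) < 2 ^ n := by positivity
    nlinarith
  have hle : ∀ n m, (D n : ℝ) / 2 ^ n ≤ ((D m : ℝ) + 1) / 2 ^ m := by
    intro n m
    calc (D n : ℝ) / 2 ^ n ≤ (D (max n m) : ℝ) / 2 ^ (max n m) := hmono (le_max_left _ _)
      _ ≤ ((D (max n m) : ℝ) + 1) / 2 ^ (max n m) := by gcongr; linarith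
      _ ≤ _ := hanti (le_max_right _ _)
  have hbdd : BddAbove (range fun n => (D n : ℝ) / 2 ^ n) :=
    ⟨((D 0 : ℝ) + 1) / 2 ^ 0, by rintro _ ⟨n, rfl⟩; exact hle n 0⟩
  set x : ℝ := ⨆ n, (D n : ℝ) / 2 ^ n with hxdef
  have hlow : ∀ n, (D n : ℝ) / 2 ^ n ≤ x := fun n => le_ciSup hbdd n
  have hup' : ∀ n, x ≤ ((D n : ℝ) + 1) / 2 ^ n := fun n => ciSup_le fun m => hle m n
  have hup : ∀ n, x < ((D n : ℝ) + 1) / 2 ^ n := by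
    intro n
    obtain ⟨m, hm, hD⟩ := h2 n
    refine lt_of_le_of_lt (hup' (m+1)) (lt_of_lt_of_le ?_ (hanti hm))
    simp only
    rw [hD, div_lt_div_iff₀ (by positivity) (by positivity), pow_succ]
    have h3 : (0:ℝ) < 2 ^ m := by positivity
    push_cast
    nlinarith
  have hx0 : 0 ≤ x := by simpa [h0] using hlow 0
  refine ⟨x, ⟨hx0, by simpa [h0] using hup 0⟩, fun n => ?_⟩
  rw [pre2, Nat.floor_eq_iff (by positivity)]
  exact ⟨(div_le_iff₀ (by positivity)).1 (hlow n), (lt_div_iff₀ (by positivity)).1 (hup n)⟩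

theorem zeros (t : ℝ) (n : ℕ) : ∃ m, n ≤ m ∧ digit t (m+1) = 0 := by
  by_contra! h
  have hd : ∀ k, pre2 t (n + k) + 1 = 2 ^ k * (pre2 t n + 1) := by
    intro k
    induction k with
    | zero => simp
    | succ k ih =>
      have h1 := h (n + k) (by omega)
      have h2 := digit_lt t (n + k + 1)
      rw [← add_assoc, pre2_succ, pow_succ]
      have : digit t (n+k+1) = 1 := by omega
      rw [this]; linarith
  by_cases ht : 0 ≤ t
  swap
  · have := h n le_rfl
    apply this
    rw [digit_eq, pre2, Nat.floor_of_nonpos]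
    exact mul_nonpos_of_nonpos_of_nonneg (by linarith) (by positivity)
  have hlt := lt_pre2 t n
  have hlim : ∀ k : ℕ, (pre2 t n + 1 : ℝ) / 2 ^ n - t ≤ (1/2:ℝ) ^ k := by
    intro k
    have h1 := pre2_le ht (n + k)
    have h2 : (pre2 t (n+k) : ℝ) + 1 = 2 ^ k * (pre2 t n + 1) := by exact_mod_cast hd k
    have h3 : (pre2 t n + 1 : ℝ) / 2 ^ n = ((pre2 t (n+k) : ℝ) + 1) / 2 ^ (n + k) := by
      rw [h2, pow_add]; field_simp
    rw [h3, add_div]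
    have h4 : (1:ℝ) / 2 ^ (n+k) ≤ (1/2) ^ k := by
      rw [one_div_pow]
      exact one_div_le_one_div_of_le (by positivity) (pow_le_pow_right₀ (by norm_num) (by omega))
    linarith
  obtain ⟨k, hk⟩ := exists_pow_lt_of_lt_one (sub_pos.2 hlt) (by norm_num : (1/2:ℝ) < 1)
  linarith [hlim k]

/-- Spread prefix. -/
noncomputable def spr (S : ℕ → Bool) (t : ℝ) : ℕ → ℕ
  | 0 => 0
  | n + 1 => 2 * spr S t n + if S (n + 1) then digit t (cnt S n + 1) else 0

theorem cnt_unbdd_step (S : ℕ → Bool) (n k : ℕ) (h : cnt S n ≤ k)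
    (hu : ∃ N, k < cnt S N) : ∃ m, n ≤ m ∧ cnt S m = k ∧ S (m+1) = true := by
  obtain ⟨N, hN⟩ := hu
  by_contra! hc
  have hmono : Monotone (cnt S) := monotone_nat_of_le_succ fun n => by simp [cnt]
  have : ∀ j, cnt S (n + j) ≤ k := by
    intro j
    induction j with
    | zero => simpa
    | succ j ih =>
      rw [← add_assoc]
      simp only [cnt]
      rcases ih.lt_or_eq with h1 | h1
      · split_ifs <;> omega
      · have := hc (n+j) (by omega) h1
        simp [this, h1]
  have h1 := this N
  have h2 := hmono (show N ≤ n + N by omega)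
  omega

theorem exists_spread (S : ℕ → Bool) (hu : ∀ k, ∃ N, k < cnt S N) (t : ℝ)
    (ht : t ∈ Ico (0:ℝ) 1) : ∃ x ∈ ES S, ∀ n, cprs S x n = pre2 t (cnt S n) := by
  obtain ⟨x, hx, hp⟩ := exists_real (spr S t) rfl (by
      intro n
      have := digit_lt t (cnt S n + 1)
      simp only [spr]; split_ifs <;> omega) (by
      intro n
      obtain ⟨k, hk, hz⟩ := zeros t (cnt S n)
      obtain ⟨m, hm, hc, hS⟩ := cnt_unbdd_step S n k hk (hu k)
      exact ⟨m, hm, by simp [spr, hS, hc, hz]⟩)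
  have hdig : ∀ n, digit x (n+1) = if S (n + 1) then digit t (cnt S n + 1) else 0 := by
    intro n
    have h := pre2_succ (x := x) n
    rw [hp, hp] at h
    simp only [spr] at h
    omega
  refine ⟨x, ⟨hx, ?_⟩, ?_⟩
  · intro i hi
    cases i with
    | zero => rw [digit_eq, pre2_zero hx]
    | succ n => rw [hdig]; simp [hi]
  · intro n
    induction n with
    | zero => simp [cprs, cnt, pre2_zero ht]
    | succ n ih =>
      simp only [cprs, cnt, hdig]
      split_ifs with h
      · rw [pre2_succ, ih]
      · simpa using ih

theorem pre2_near {x y : ℝ} (hx : 0 ≤ x) (n : ℕ) (h : |x - y| ≤ (1/2:ℝ)^n) :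
    pre2 y n ≤ pre2 x n + 1 := by
  have h1 : y * 2 ^ n ≤ x * 2 ^ n + 1 := by
    have h2 : y - x ≤ (1/2:ℝ)^n := by
      rw [abs_sub_comm] at h; exact (le_abs_self _).trans h
    have h3 : (1/2:ℝ)^n * 2^n = 1 := by rw [← mul_pow]; norm_num
    have h4 : (0:ℝ) < 2 ^ n := by positivity
    nlinarith
  unfold pre2
  rw [← Nat.floor_add_one (by positivity)]
  exact Nat.floor_le_floor h1

theorem t_near (S : ℕ → Bool) {x y t u : ℝ} (hx : x ∈ ES S) (hy : y ∈ ES S)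
    (ht : 0 ≤ t) (hu : 0 ≤ u)
    (hxt : ∀ n, cprs S x n = pre2 t (cnt S n)) (hyu : ∀ n, cprs S y n = pre2 u (cnt S n))
    (n : ℕ) (h : |x - y| ≤ (1/2:ℝ)^n) : |t - u| ≤ 2 * (1/2:ℝ) ^ cnt S n := by
  have a := (key S hx hy n).2.2.2 (pre2_near hx.1.1 n h)
  have b := (key S hy hx n).2.2.2 (pre2_near hy.1.1 n (by rwa [abs_sub_comm]))
  rw [hxt, hyu] at a b
  have h1 := pre2_le ht (cnt S n)
  have h2 := lt_pre2 t (cnt S n)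
  have h3 := pre2_le hu (cnt S n)
  have h4 := lt_pre2 u (cnt S n)
  have h5 : (0:ℝ) < 2 ^ cnt S n := by positivity
  rw [div_le_iff₀ h5] at h1 h3
  rw [lt_div_iff₀ h5] at h2 h4
  have a' : (pre2 u (cnt S n) : ℝ) ≤ pre2 t (cnt S n) + 1 := by exact_mod_cast a
  have b' : (pre2 t (cnt S n) : ℝ) ≤ pre2 u (cnt S n) + 1 := by exact_mod_cast b
  rw [one_div_pow, mul_one_div, le_div_iff₀ h5, ← abs_of_pos h5, ← abs_mul, abs_le]
  constructor <;> linarith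

theorem lower (S : ℕ → Bool) (s : ℝ) (hs : 0 < s) (K : ℝ)
    (hf : ∀ n : ℕ, s * n - K ≤ (cnt S n : ℝ)) : ENNReal.ofReal s ≤ dimH (ES S) := by
  have hu : ∀ k, ∃ N, k < cnt S N := by
    intro k
    obtain ⟨N, hN⟩ := exists_nat_gt ((k + K) / s)
    refine ⟨N, ?_⟩
    rw [div_lt_iff₀ hs] at hN
    have := hf N
    exact_mod_cast (by linarith : (k:ℝ) < cnt S N)
  choose! f hfES hfc using exists_spread S hu
  have hbound : ∀ t ∈ Ico (0:ℝ) 1, ∀ u ∈ Ico (0:ℝ) 1, ∀ n : ℕ, |f t - f u| ≤ (1/2:ℝ)^n →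
      |t - u| ≤ 2 * (2:ℝ) ^ K * ((1/2:ℝ)^n) ^ s := by
    intro t ht u hu n hn
    refine (t_near S (hfES t ht) (hfES u hu) ht.1 hu.1 (hfc t ht) (hfc u hu) n hn).trans ?_
    rw [mul_assoc]
    gcongr
    rw [one_div_pow, one_div_pow, one_div, one_div, ← Real.rpow_natCast, ← Real.rpow_natCast,
      ← Real.rpow_neg (by norm_num), ← Real.rpow_neg (by norm_num), ← Real.rpow_mul (by norm_num),
      ← Real.rpow_add (by norm_num)]
    apply Real.rpow_le_rpow_of_exponent_le (by norm_num)
    linarith [hf n]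
  have hhol : ∀ t ∈ Ico (0:ℝ) 1, ∀ u ∈ Ico (0:ℝ) 1,
      |t - u| ≤ (2 * (2:ℝ) ^ K * 2 ^ s) * |f t - f u| ^ s := by
    intro t ht u hu
    rcases eq_or_ne (f t) (f u) with he | hne
    · have h1 : ∀ n : ℕ, |t - u| ≤ 2 * (2:ℝ) ^ K * ((1/2:ℝ)^n) ^ s := fun n =>
        hbound t ht u hu n (by rw [he, sub_self, abs_zero]; positivity)
      have h2 : Tendsto (fun n : ℕ => 2 * (2:ℝ) ^ K * ((1/2:ℝ)^n) ^ s) atTop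
          (nhds (2 * (2:ℝ) ^ K * 0 ^ s)) :=
        ((tendsto_pow_atTop_nhds_zero_of_lt_one (r := (1/2:ℝ)) (by norm_num)
          (by norm_num)).rpow_const (Or.inr hs.le)).const_mul _
      have h3 := ge_of_tendsto' h2 h1
      rw [Real.zero_rpow hs.ne', mul_zero] at h3
      exact h3.trans (by positivity)
    · have hpos : 0 < |f t - f u| := abs_pos.2 (sub_ne_zero.2 hne)
      have hle1 : |f t - f u| ≤ 1 := by
        have h1 := (hfES t ht).1
        have h2 := (hfES u hu).1
        rw [abs_le]; constructor <;> linarith [h1.1, h1.2, h2.1, h2.2]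
      obtain ⟨n, hn1, hn2⟩ := exists_nat_pow_near_of_lt_one hpos hle1
        (by norm_num : (0:ℝ) < 1/2) (by norm_num : (1/2:ℝ) < 1)
      refine (hbound t ht u hu n hn2).trans ?_
      rw [mul_assoc (2 * (2:ℝ)^K), ← Real.mul_rpow (by norm_num) (abs_nonneg _)]
      gcongr
      rw [pow_succ] at hn1
      linarith
  have hinj : InjOn f (Ico (0:ℝ) 1) := by
    intro t ht u hu h
    have := hhol t ht u hu
    rw [h, sub_self, abs_zero, Real.zero_rpow hs.ne', mul_zero] at this
    exact sub_eq_zero.1 (abs_eq_zero.1 (le_antisymm this (abs_nonneg _)))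
  set g := Function.invFunOn f (Ico (0:ℝ) 1) with hg
  have hgf : ∀ t ∈ Ico (0:ℝ) 1, g (f t) = t := fun t ht => hinj.leftInvOn_invFunOn ht
  have hC : 0 ≤ 2 * (2:ℝ) ^ K * 2 ^ s := by positivity
  have hH : HolderOnWith (2 * (2:ℝ) ^ K * 2 ^ s).toNNReal s.toNNReal g (f '' Ico (0:ℝ) 1) := by
    rintro _ ⟨t, ht, rfl⟩ _ ⟨u, hu, rfl⟩
    rw [hgf t ht, hgf u hu, edist_dist, edist_dist, Real.dist_eq, Real.dist_eq]
    rw [Real.coe_toNNReal _ hs.le, ENNReal.ofReal_rpow_of_nonneg (abs_nonneg _) hs.le]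
    change _ ≤ ENNReal.ofReal (2 * (2:ℝ) ^ K * 2 ^ s) * _
    rw [← ENNReal.ofReal_mul hC]
    exact ENNReal.ofReal_le_ofReal (hhol t ht u hu)
  have himg : g '' (f '' Ico (0:ℝ) 1) = Ico (0:ℝ) 1 := by
    rw [image_image]
    exact (image_congr hgf).trans (image_id _)
  have h1 := hH.dimH_image_le (Real.toNNReal_pos.2 hs)
  rw [himg, Real.dimH_of_nonempty_interior (by rw [interior_Ico]; exact nonempty_Ioo.2 one_pos)] at h1
  have h2 : dimH (f '' Ico (0:ℝ) 1) ≤ dimH (ES S) := dimH_mono (by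
    rintro _ ⟨t, ht, rfl⟩; exact hfES t ht)
  have e : (s.toNNReal : ℝ≥0∞) = ENNReal.ofReal s := rfl
  rw [e, ENNReal.le_div_iff_mul_le (by left; simpa using hs) (by left; simp)] at h1
  refine le_trans ?_ h2
  simpa using h1

theorem stmt12 (S : ℕ → Bool) (α : ℝ) (hα : 0 < α)
    (hdens : Filter.liminf
      (fun n : ℕ => (({i : ℕ | S i = true} ∩ Set.Icc 1 n).ncard : ℝ) / n)
      Filter.atTop = α) :
    dimH (ES S) = ENNReal.ofReal α := by
  simp only [cnt_eq] at hdens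
  have hb0 : ∀ n : ℕ, (0:ℝ) ≤ (cnt S n : ℝ) / n := fun n => by positivity
  have hb1 : ∀ n : ℕ, (cnt S n : ℝ) / n ≤ 1 := fun n =>
    div_le_one_of_le₀ (by exact_mod_cast cnt_le S n) (by positivity)
  have hbd : IsBoundedUnder (· ≥ ·) atTop (fun n : ℕ => (cnt S n : ℝ) / n) :=
    isBoundedUnder_of ⟨0, hb0⟩
  have hbd' : IsBoundedUnder (· ≤ ·) atTop (fun n : ℕ => (cnt S n : ℝ) / n) :=
    isBoundedUnder_of ⟨1, hb1⟩
  apply le_antisymm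
  · have hall : ∀ s : ℝ, α < s → dimH (ES S) ≤ ENNReal.ofReal s := by
      intro s hs
      apply upper S s (hα.trans hs)
      have := frequently_lt_of_liminf_lt hbd'.isCoboundedUnder_ge (hdens ▸ hs)
      refine (this.and_eventually (eventually_gt_atTop 0)).mono ?_
      rintro n ⟨h1, h2⟩
      have h3 : (0:ℝ) < n := by exact_mod_cast h2
      exact ((div_lt_iff₀ h3).1 h1).le
    have hc : Tendsto ENNReal.ofReal (nhdsWithin α (Ioi α)) (nhds (ENNReal.ofReal α)) :=
      (ENNReal.continuous_ofReal.tendsto α).mono_left nhdsWithin_le_nhds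
    exact ge_of_tendsto hc (eventually_mem_nhdsWithin.mono hall)
  · have hall : ∀ s : ℝ, 0 < s → s < α → ENNReal.ofReal s ≤ dimH (ES S) := by
      intro s hs0 hs
      have := eventually_lt_of_lt_liminf (hdens ▸ hs) hbd
      obtain ⟨N, hN⟩ := eventually_atTop.1 this
      refine lower S s hs0 (s * N) fun n => ?_
      rcases le_total N n with h | h
      · rcases Nat.eq_zero_or_pos n with rfl | hn
        · have : 0 ≤ s * N := by positivity
          have h2 : (0:ℝ) ≤ cnt S 0 := by positivity
          push_cast; linarith
        · have h3 : (0:ℝ) < n := by exact_mod_cast hn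
          have h4 := (lt_div_iff₀ h3).1 (hN n h)
          have : 0 ≤ s * N := by positivity
          linarith
      · have h2 : (0:ℝ) ≤ cnt S n := by positivity
        have h3 : (n:ℝ) ≤ N := by exact_mod_cast h
        nlinarith
    have hc : Tendsto ENNReal.ofReal (nhdsWithin α (Iio α)) (nhds (ENNReal.ofReal α)) :=
      (ENNReal.continuous_ofReal.tendsto α).mono_left nhdsWithin_le_nhds
    refine le_of_tendsto hc ?_
    filter_upwards [Ioo_mem_nhdsLT hα] with s hs
    exact hall s hs.1 hs.2
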